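/- For every τ in the complex upper half-plane ℍ, one has ϑ(τ − 1/2; 2τ) = e^{−πiτ/2} · η(2τ)⁵/(η(τ)²·η(4τ)²). Equivalently, ϑ(τ/2 − 1/2; τ) = e^{−πiτ/4}·e₂(τ/2), where e₂(τ) := η(2τ)⁵/(η(τ)²η(4τ)²). -/

import Mathlib

open Complex

/-- The Dedekind eta function `η(τ) = e^{πiτ/12} ∏_{n≥1} (1 - e^{2πinτ})`. -/
noncomputable def dedekindEta (τ : ℂ) : ℂ :=
  Complex.exp ((Real.pi : ℂ) * I * τ / 12) *
    ∏' n : ℕ, (1 - Complex.exp (2 * (Real.pi : ℂ) * I * ((n : ℂ) + 1) * τ))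

/-- Zwegers' Jacobi theta function
`ϑ(v;τ) = ∑_{n∈ℤ} e^{2πi(n+1/2)(v+1/2)} e^{πiτ(n+1/2)²}`. -/
noncomputable def jacobiThetaZw (v τ : ℂ) : ℂ :=
  ∑' n : ℤ, Complex.exp (2 * (Real.pi : ℂ) * I * ((n : ℂ) + 1/2) * (v + 1/2)) *
    Complex.exp ((Real.pi : ℂ) * I * τ * ((n : ℂ) + 1/2) ^ 2)

/-!
The theta value is the nullwert `∑ q^{n²}`, `q = e^{2πiτ}`, up to an exponential factor, by
quasi-periodicity. The Jacobi triple product turns it into `(q²;q²)_∞ (-q;q²)_∞²`, and splitting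
`(q;q)_∞` and `(q²;q²)_∞` by the parity of the exponent gives
`(-q;q²)_∞ = (q²;q²)_∞² / ((q;q)_∞ (q⁴;q⁴)_∞)`. The triple product itself is the limit of a finite
identity with Gaussian binomial coefficients as weights, which follows from the two `q`-Pascal
rules.
-/

open Filter Finset Topology

section GaussBinom

/-- The Gaussian binomial coefficient `[n, k]_q`, defined by the `q`-Pascal rule so that it makes
sense in every commutative semiring; it vanishes for `n < k`. -/
def gaussBinom {R : Type*} [CommSemiring R] (q : R) : ℕ → ℕ → R
  | _, 0 => 1
  | 0, _ + 1 => 0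
  | n + 1, k + 1 => gaussBinom q n k + q ^ (k + 1) * gaussBinom q n (k + 1)

variable {R : Type*} [CommSemiring R] (q : R)

@[simp]
lemma gaussBinom_zero_right (n : ℕ) : gaussBinom q n 0 = 1 := by
  cases n <;> rfl

lemma gaussBinom_succ_succ (n k : ℕ) :
    gaussBinom q (n + 1) (k + 1) = gaussBinom q n k + q ^ (k + 1) * gaussBinom q n (k + 1) :=
  rfl

lemma gaussBinom_eq_zero_of_lt {n k : ℕ} (h : n < k) : gaussBinom q n k = 0 := by
  induction n generalizing k with
  | zero => obtain ⟨k, rfl⟩ := Nat.exists_eq_succ_of_ne_zero h.ne'; rfl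
  | succ n ih =>
    obtain ⟨k, rfl⟩ := Nat.exists_eq_succ_of_ne_zero (Nat.ne_zero_of_lt h)
    rw [gaussBinom_succ_succ, ih (by omega), ih (by omega), mul_zero, add_zero]

@[simp]
lemma gaussBinom_self (n : ℕ) : gaussBinom q n n = 1 := by
  induction n with
  | zero => rfl
  | succ n ih =>
    rw [gaussBinom_succ_succ, ih, gaussBinom_eq_zero_of_lt q n.lt_succ_self, mul_zero, add_zero]

lemma gaussBinom_succ_succ' (k d : ℕ) :
    gaussBinom q (k + d + 1) (k + 1) =
      q ^ d * gaussBinom q (k + d) k + gaussBinom q (k + d) (k + 1) := by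
  induction k generalizing d with
  | zero =>
    induction d with
    | zero => simp [gaussBinom]
    | succ d ih =>
      conv_rhs => rw [← add_assoc, gaussBinom_succ_succ]
      rw [gaussBinom_succ_succ, ← add_assoc, ih]
      simp only [gaussBinom_zero_right]
      ring
  | succ k ihk =>
    induction d with
    | zero => simp [gaussBinom_eq_zero_of_lt]
    | succ d ihd =>
      have hk := ihk (d + 1)
      rw [show k + (d + 1) + 1 = k + 1 + d + 1 by ring, show k + (d + 1) = k + 1 + d by ring] at hk
      calc gaussBinom q (k + 1 + d + 1 + 1) (k + 1 + 1)
        _ = gaussBinom q (k + 1 + d + 1) (k + 1) +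
              q ^ (k + 2) * gaussBinom q (k + 1 + d + 1) (k + 2) := rfl
        _ = q ^ (d + 1) * (gaussBinom q (k + 1 + d) k +
                q ^ (k + 1) * gaussBinom q (k + 1 + d) (k + 1)) +
              (gaussBinom q (k + 1 + d) (k + 1) +
                q ^ (k + 2) * gaussBinom q (k + 1 + d) (k + 2)) := by rw [hk, ihd]; ring
        _ = q ^ (d + 1) * gaussBinom q (k + 1 + d + 1) (k + 1) +
              gaussBinom q (k + 1 + d + 1) (k + 2) := rfl

end GaussBinom

section FiniteTripleProduct

variable {R : Type*} [CommRing R]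

/-- The finite `q`-Pochhammer symbol `(a;q)_n`. -/
def qPochhammer (a q : R) (n : ℕ) : R :=
  ∏ k ∈ range n, (1 - a * q ^ k)

@[simp]
lemma qPochhammer_zero (a q : R) : qPochhammer a q 0 = 1 :=
  prod_range_zero _

lemma qPochhammer_succ (a q : R) (n : ℕ) :
    qPochhammer a q (n + 1) = qPochhammer a q n * (1 - a * q ^ n) :=
  prod_range_succ _ _

lemma gaussBinom_mul_qPochhammer_mul_qPochhammer (q : R) (m n : ℕ) :
    gaussBinom q (m + n) m * (qPochhammer q q m * qPochhammer q q n) = qPochhammer q q (m + n) := by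
  induction m generalizing n with
  | zero => simp
  | succ m ihm =>
    induction n with
    | zero => simp
    | succ n ihn =>
      have hm := ihm (n + 1)
      rw [← add_assoc] at hm
      rw [show m + 1 + n = m + n + 1 by ring] at ihn
      rw [show m + 1 + (n + 1) = m + n + 1 + 1 by ring, gaussBinom_succ_succ,
        qPochhammer_succ q q (m + n + 1)]
      rw [qPochhammer_succ q q n] at hm ⊢
      rw [qPochhammer_succ q q m] at ihn ⊢
      linear_combination (1 - q * q ^ m) * hm + q ^ (m + 1) * (1 - q * q ^ n) * ihn

/-- The Laurent polynomial side of the finite triple product, `∑ [m+n, n+j]_{q²} q^{j²} z^j` over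
`-n ≤ j ≤ m`, multiplied by `z ^ n` to clear the negative powers of `z`. -/
def finiteThetaSum (q z : R) (m n : ℕ) : R :=
  ∑ k ∈ range (m + n + 1), gaussBinom (q ^ 2) (m + n) k * (q ^ ((k - n : ℤ).natAbs ^ 2) * z ^ k)

lemma finiteThetaSum_eq_sum_succ_add (q z : R) (m n : ℕ) :
    finiteThetaSum q z m n =
      ∑ k ∈ range (m + n + 1), gaussBinom (q ^ 2) (m + n) (k + 1) *
        (q ^ ((↑(k + 1) - n : ℤ).natAbs ^ 2) * z ^ (k + 1)) + q ^ (n ^ 2) := by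
  have hshift := sum_range_succ' (fun k ↦
    gaussBinom (q ^ 2) (m + n) k * (q ^ ((k - n : ℤ).natAbs ^ 2) * z ^ k)) (m + n + 1)
  rw [sum_range_succ, gaussBinom_eq_zero_of_lt _ (Nat.lt_succ_self _), zero_mul, add_zero] at hshift
  simpa [finiteThetaSum] using hshift

lemma finiteThetaSum_succ_left (q z : R) (m n : ℕ) :
    finiteThetaSum q z (m + 1) n = (1 + z * q ^ (2 * m + 1)) * finiteThetaSum q z m n := by
  have hexp {k d : ℕ} (h : k + d = m + n) :
      2 * d + (↑(k + 1) - n : ℤ).natAbs ^ 2 = 2 * m + 1 + (k - n : ℤ).natAbs ^ 2 := by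
    zify at h ⊢
    simp only [sq_abs]
    linear_combination 2 * h
  have hterm : ∀ k ∈ range (m + n + 1),
      gaussBinom (q ^ 2) (m + n + 1) (k + 1) * (q ^ ((↑(k + 1) - n : ℤ).natAbs ^ 2) * z ^ (k + 1)) =
        z * q ^ (2 * m + 1) *
          (gaussBinom (q ^ 2) (m + n) k * (q ^ ((k - n : ℤ).natAbs ^ 2) * z ^ k)) +
        gaussBinom (q ^ 2) (m + n) (k + 1) *
          (q ^ ((↑(k + 1) - n : ℤ).natAbs ^ 2) * z ^ (k + 1)) := by
    intro k hk
    obtain ⟨d, hd⟩ := Nat.exists_eq_add_of_le (mem_range_succ_iff.mp hk)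
    have hpow := congrArg (q ^ ·) (hexp hd.symm)
    simp only [pow_add q (2 * d), pow_add q (2 * m + 1), pow_mul q 2 d] at hpow
    rw [hd, gaussBinom_succ_succ']
    linear_combination gaussBinom (q ^ 2) (k + d) k * z ^ (k + 1) * hpow
  have hshift := finiteThetaSum_eq_sum_succ_add q z m n
  rw [finiteThetaSum, show m + 1 + n = m + n + 1 by ring, sum_range_succ', sum_congr rfl hterm,
    sum_add_distrib, ← mul_sum, ← finiteThetaSum]
  simp only [gaussBinom_zero_right, Nat.cast_zero, zero_sub, Int.natAbs_neg, Int.natAbs_natCast]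
  linear_combination -hshift

lemma finiteThetaSum_succ_right (q z : R) (m n : ℕ) :
    finiteThetaSum q z m (n + 1) = (z + q ^ (2 * n + 1)) * finiteThetaSum q z m n := by
  have hexp (k : ℕ) :
      2 * k + (k - ↑(n + 1) : ℤ).natAbs ^ 2 = 2 * n + 1 + (k - n : ℤ).natAbs ^ 2 := by
    zify
    simp only [sq_abs]
    ring
  have hpow (k : ℕ) : (q ^ 2) ^ k * q ^ ((k - ↑(n + 1) : ℤ).natAbs ^ 2) =
      q ^ (2 * n + 1) * q ^ ((k - n : ℤ).natAbs ^ 2) := by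
    rw [← pow_mul, ← pow_add, ← pow_add, hexp]
  have hterm (k : ℕ) : gaussBinom (q ^ 2) (m + n + 1) (k + 1) *
        (q ^ ((↑(k + 1) - ↑(n + 1) : ℤ).natAbs ^ 2) * z ^ (k + 1)) =
      z * (gaussBinom (q ^ 2) (m + n) k * (q ^ ((k - n : ℤ).natAbs ^ 2) * z ^ k)) +
        q ^ (2 * n + 1) * (gaussBinom (q ^ 2) (m + n) (k + 1) *
          (q ^ ((↑(k + 1) - n : ℤ).natAbs ^ 2) * z ^ (k + 1))) := by
    have hk : (↑(k + 1) - ↑(n + 1) : ℤ) = k - n := by push_cast; ring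
    have hk' := hpow (k + 1)
    rw [hk] at hk' ⊢
    rw [gaussBinom_succ_succ]
    linear_combination gaussBinom (q ^ 2) (m + n) (k + 1) * z ^ (k + 1) * hk'
  have hshift := finiteThetaSum_eq_sum_succ_add q z m n
  rw [finiteThetaSum, ← add_assoc, sum_range_succ', sum_congr rfl fun k _ ↦ hterm k,
    sum_add_distrib, ← mul_sum, ← mul_sum, ← finiteThetaSum]
  simp only [gaussBinom_zero_right, Nat.cast_zero, zero_sub, Int.natAbs_neg, Int.natAbs_natCast]
  linear_combination -q ^ (2 * n + 1) * hshift

lemma finiteThetaSum_eq_qPochhammer (q : R) {z w : R} (hzw : z * w = 1) (m n : ℕ) :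
    finiteThetaSum q z m n =
      z ^ n * (qPochhammer (-(z * q)) (q ^ 2) m * qPochhammer (-(w * q)) (q ^ 2) n) := by
  induction m with
  | zero =>
    induction n with
    | zero => simp [finiteThetaSum]
    | succ n ih =>
      rw [finiteThetaSum_succ_right, ih, qPochhammer_succ]
      linear_combination (-z ^ n * q ^ (2 * n + 1) * qPochhammer (-(w * q)) (q ^ 2) n *
        qPochhammer (-(z * q)) (q ^ 2) 0) * hzw
  | succ m ih =>
    rw [finiteThetaSum_succ_left, ih, qPochhammer_succ]
    ring

lemma qPochhammer_mul_qPochhammer_inv_eq_sum_gaussBinom {K : Type*} [Field K] (q : K) {z : K}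
    (hz : z ≠ 0) (N : ℕ) :
    qPochhammer (-(z * q)) (q ^ 2) N * qPochhammer (-(z⁻¹ * q)) (q ^ 2) N =
      ∑ n ∈ Icc (-N : ℤ) N,
        gaussBinom (q ^ 2) (N + N) (N + n).toNat * (q ^ (n.natAbs ^ 2) * z ^ n) := by
  apply mul_left_cancel₀ (pow_ne_zero N hz)
  rw [← finiteThetaSum_eq_qPochhammer q (mul_inv_cancel₀ hz), finiteThetaSum, mul_sum]
  have hterm (k : ℕ) : gaussBinom (q ^ 2) (N + N) k * (q ^ ((k - N : ℤ).natAbs ^ 2) * z ^ k) =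
      z ^ N * (gaussBinom (q ^ 2) (N + N) (N + (k - N : ℤ)).toNat *
        (q ^ ((k - N : ℤ).natAbs ^ 2) * z ^ (k - N : ℤ))) := by
    have hk : z ^ k = z ^ N * z ^ (k - N : ℤ) := by
      rw [← zpow_natCast z N, ← zpow_add₀ hz, add_sub_cancel, zpow_natCast]
    rw [add_sub_cancel, Int.toNat_natCast, hk]
    ring
  refine sum_nbij' (fun k ↦ (k - N : ℤ)) (fun n ↦ (N + n).toNat) ?_ ?_ ?_ ?_ fun k _ ↦ hterm k
  all_goals
    intro
    simp only [mem_range, mem_Icc]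
    omega

end FiniteTripleProduct

section TripleProduct

variable {K : Type*} [NormedField K]

/-- The infinite `q`-Pochhammer symbol `(a;q)_∞`, meaningful for `‖q‖ < 1`. -/
noncomputable def qPochhammerInf (a q : K) : K :=
  ∏' k : ℕ, (1 - a * q ^ k)

variable {q : K}

lemma norm_sq_lt_one (hq : ‖q‖ < 1) : ‖q ^ 2‖ < 1 := by
  rw [norm_pow]
  exact pow_lt_one₀ (norm_nonneg q) hq two_ne_zero

lemma one_sub_mul_pow_ne_zero (hq : ‖q‖ < 1) (n : ℕ) : 1 - q * q ^ n ≠ 0 := fun h ↦ by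
  have hlt : ‖q ^ (n + 1)‖ < 1 := by
    rw [norm_pow]
    exact pow_lt_one₀ (norm_nonneg q) hq n.succ_ne_zero
  rw [pow_succ', ← sub_eq_zero.mp h, norm_one] at hlt
  exact hlt.false

lemma qPochhammer_self_ne_zero (hq : ‖q‖ < 1) (n : ℕ) : qPochhammer q q n ≠ 0 :=
  prod_ne_zero_iff.mpr fun k _ ↦ one_sub_mul_pow_ne_zero hq k

lemma summable_norm_neg_mul_pow (a : K) (hq : ‖q‖ < 1) : Summable fun k : ℕ ↦ ‖-(a * q ^ k)‖ := by
  simpa using (summable_geometric_of_lt_one (norm_nonneg q) hq).mul_left ‖a‖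

lemma summable_norm_pow_sq_mul_pow (hq : ‖q‖ < 1) (z : K) :
    Summable fun n : ℕ ↦ ‖q ^ (n ^ 2) * z ^ n‖ := by
  have hsmall : ∀ᶠ n : ℕ in atTop, ‖q ^ n * z‖ ≤ 1 / 2 := by
    have h : Tendsto (fun n : ℕ ↦ ‖q ^ n * z‖) atTop (𝓝 0) := by
      simpa using ((tendsto_pow_atTop_nhds_zero_of_norm_lt_one hq).mul_const z).norm
    exact h.eventually_le_const one_half_pos
  refine Summable.of_norm_bounded_eventually_nat summable_geometric_two ?_
  filter_upwards [hsmall] with n hn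
  rw [norm_norm, sq, pow_mul, ← mul_pow, norm_pow]
  gcongr

lemma summable_norm_pow_sq_mul_zpow (hq : ‖q‖ < 1) (z : K) :
    Summable fun n : ℤ ↦ ‖q ^ (n.natAbs ^ 2) * z ^ n‖ := by
  refine .of_nat_of_neg ?_ ?_
  · simpa using summable_norm_pow_sq_mul_pow hq z
  · simpa using summable_norm_pow_sq_mul_pow hq z⁻¹

variable [CompleteSpace K]

lemma multipliable_one_sub_mul_pow (a : K) (hq : ‖q‖ < 1) :
    Multipliable fun k : ℕ ↦ 1 - a * q ^ k := by
  simpa only [sub_eq_add_neg] using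
    multipliable_one_add_of_summable (summable_norm_neg_mul_pow a hq)

lemma tendsto_qPochhammer (a : K) (hq : ‖q‖ < 1) :
    Tendsto (qPochhammer a q) atTop (𝓝 (qPochhammerInf a q)) :=
  (multipliable_one_sub_mul_pow a hq).hasProd.tendsto_prod_nat

lemma qPochhammerInf_self_ne_zero (hq : ‖q‖ < 1) : qPochhammerInf q q ≠ 0 := by
  simp only [qPochhammerInf, sub_eq_add_neg]
  refine tprod_one_add_ne_zero_of_summable (fun k ↦ ?_) (summable_norm_neg_mul_pow q hq)
  simpa only [sub_eq_add_neg] using one_sub_mul_pow_ne_zero hq k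

lemma tendsto_gaussBinom {ι : Type*} {l : Filter ι} (hq : ‖q‖ < 1) {a b : ι → ℕ}
    (ha : Tendsto a l atTop) (hb : Tendsto b l atTop) :
    Tendsto (fun i ↦ gaussBinom q (a i + b i) (a i)) l (𝓝 (qPochhammerInf q q)⁻¹) := by
  have hP := tendsto_qPochhammer q hq
  have hE := qPochhammerInf_self_ne_zero hq
  have h := (hP.comp (ha.atTop_add_atTop hb)).div ((hP.comp ha).mul (hP.comp hb))
    (mul_ne_zero hE hE)
  rw [div_mul_cancel_left₀ hE] at h
  refine h.congr fun i ↦ ?_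
  have hPi := mul_ne_zero (qPochhammer_self_ne_zero hq (a i)) (qPochhammer_self_ne_zero hq (b i))
  exact (eq_div_of_mul_eq hPi (gaussBinom_mul_qPochhammer_mul_qPochhammer q _ _)).symm

lemma tendsto_gaussBinom_add_self (hq : ‖q‖ < 1) (n : ℤ) :
    Tendsto (fun N : ℕ ↦ gaussBinom q (N + N) (N + n).toNat) atTop
      (𝓝 (qPochhammerInf q q)⁻¹) := by
  have hadd : Tendsto (fun N : ℕ ↦ (N + n).toNat) atTop atTop :=
    tendsto_atTop.mpr fun b ↦ by filter_upwards [eventually_ge_atTop (b + n.natAbs)]; omega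
  have hsub : Tendsto (fun N : ℕ ↦ (N - n).toNat) atTop atTop :=
    tendsto_atTop.mpr fun b ↦ by filter_upwards [eventually_ge_atTop (b + n.natAbs)]; omega
  refine (tendsto_gaussBinom hq hadd hsub).congr' ?_
  filter_upwards [eventually_ge_atTop n.natAbs] with N hN
  congr 1
  omega

lemma exists_norm_gaussBinom_le (hq : ‖q‖ < 1) : ∃ C, ∀ n k, ‖gaussBinom q n k‖ ≤ C := by
  have hP := tendsto_qPochhammer q hq
  obtain ⟨A, hA⟩ := hP.norm.bddAbove_range
  obtain ⟨B, hB⟩ := (hP.inv₀ (qPochhammerInf_self_ne_zero hq)).norm.bddAbove_range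
  rw [mem_upperBounds, Set.forall_mem_range] at hA hB
  have hA0 : 0 ≤ A := (norm_nonneg _).trans (hA 0)
  have hB0 : 0 ≤ B := (norm_nonneg _).trans (hB 0)
  refine ⟨A * (B * B), fun n k ↦ ?_⟩
  rcases lt_or_ge n k with hlt | hle
  · rw [gaussBinom_eq_zero_of_lt q hlt, norm_zero]
    positivity
  obtain ⟨d, rfl⟩ := Nat.exists_eq_add_of_le hle
  have hPkd := mul_ne_zero (qPochhammer_self_ne_zero hq k) (qPochhammer_self_ne_zero hq d)
  rw [eq_div_of_mul_eq hPkd (gaussBinom_mul_qPochhammer_mul_qPochhammer q k d), div_eq_mul_inv,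
    mul_inv, norm_mul, norm_mul]
  gcongr
  exacts [hA _, hB _, hB _]

theorem tsum_pow_sq_mul_zpow_eq_qPochhammerInf {z : K} (hq : ‖q‖ < 1) (hz : z ≠ 0) :
    ∑' n : ℤ, q ^ (n.natAbs ^ 2) * z ^ n =
      qPochhammerInf (q ^ 2) (q ^ 2) *
        (qPochhammerInf (-(z * q)) (q ^ 2) * qPochhammerInf (-(z⁻¹ * q)) (q ^ 2)) := by
  have hq2 := norm_sq_lt_one hq
  obtain ⟨C, hC⟩ := exists_norm_gaussBinom_le hq2
  have hsum : Tendsto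
      (fun N ↦ qPochhammer (-(z * q)) (q ^ 2) N * qPochhammer (-(z⁻¹ * q)) (q ^ 2) N) atTop
      (𝓝 (∑' n : ℤ, (qPochhammerInf (q ^ 2) (q ^ 2))⁻¹ * (q ^ (n.natAbs ^ 2) * z ^ n))) := by
    refine Tendsto.congr (fun N ↦ ((qPochhammer_mul_qPochhammer_inv_eq_sum_gaussBinom q hz N).trans
      (sum_eq_tsum_indicator _ _)).symm) ?_
    refine tendsto_tsum_of_dominated_convergence
      ((summable_norm_pow_sq_mul_zpow hq z).mul_left C) (fun n ↦ ?_) (.of_forall fun N n ↦ ?_)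
    · refine ((tendsto_gaussBinom_add_self hq2 n).mul_const _).congr' ?_
      filter_upwards [eventually_ge_atTop n.natAbs] with N hN
      rw [Set.indicator_of_mem]
      simp only [coe_Icc, Set.mem_Icc]
      omega
    · refine (norm_indicator_le_norm_self _ _).trans ?_
      rw [norm_mul]
      gcongr
      exact hC _ _
  have hprod := (tendsto_qPochhammer (-(z * q)) hq2).mul (tendsto_qPochhammer (-(z⁻¹ * q)) hq2)
  rw [← tendsto_nhds_unique hsum hprod, tsum_mul_left,
    mul_inv_cancel_left₀ (qPochhammerInf_self_ne_zero hq2)]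

end TripleProduct

section ThetaNullwert

variable {K : Type*} [NormedField K] [CompleteSpace K] {q : K}

lemma qPochhammerInf_even_mul_odd (a : K) (hq : ‖q‖ < 1) :
    qPochhammerInf a (q ^ 2) * qPochhammerInf (a * q) (q ^ 2) = qPochhammerInf a q := by
  have hq2 := norm_sq_lt_one hq
  have heven (k : ℕ) : a * (q ^ 2) ^ k = a * q ^ (2 * k) := by ring
  have hodd (k : ℕ) : a * q * (q ^ 2) ^ k = a * q ^ (2 * k + 1) := by ring
  have hmul_even := multipliable_one_sub_mul_pow a hq2
  have hmul_odd := multipliable_one_sub_mul_pow (a * q) hq2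
  simp only [qPochhammerInf, heven, hodd] at hmul_even hmul_odd ⊢
  exact tprod_even_mul_odd (f := fun k ↦ 1 - a * q ^ k) hmul_even hmul_odd

lemma qPochhammerInf_mul_qPochhammerInf_neg (a : K) (hq : ‖q‖ < 1) :
    qPochhammerInf a q * qPochhammerInf (-a) q = qPochhammerInf (a ^ 2) (q ^ 2) := by
  rw [qPochhammerInf, qPochhammerInf, ← (multipliable_one_sub_mul_pow a hq).tprod_mul
    (multipliable_one_sub_mul_pow (-a) hq)]
  exact tprod_congr fun k ↦ by ring

lemma qPochhammerInf_neg_sq_mul (hq : ‖q‖ < 1) :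
    qPochhammerInf (-q) (q ^ 2) * (qPochhammerInf q q * qPochhammerInf (q ^ 4) (q ^ 4)) =
      qPochhammerInf (q ^ 2) (q ^ 2) ^ 2 := by
  have hq2 := norm_sq_lt_one hq
  have split_q := qPochhammerInf_even_mul_odd q hq
  have split_sq := qPochhammerInf_even_mul_odd (q ^ 2) hq2
  have odd_sq := qPochhammerInf_mul_qPochhammerInf_neg q hq2
  simp only [← pow_mul, ← sq] at split_q split_sq odd_sq
  linear_combination (-qPochhammerInf (-q) (q ^ 2) * qPochhammerInf (q ^ 4) (q ^ 4)) * split_q +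
    qPochhammerInf (q ^ 2) (q ^ 2) * split_sq +
    qPochhammerInf (q ^ 2) (q ^ 2) * qPochhammerInf (q ^ 4) (q ^ 4) * odd_sq

theorem tsum_pow_sq_eq_qPochhammerInf (hq : ‖q‖ < 1) :
    ∑' n : ℤ, q ^ (n.natAbs ^ 2) = qPochhammerInf (q ^ 2) (q ^ 2) ^ 5 /
      (qPochhammerInf q q ^ 2 * qPochhammerInf (q ^ 4) (q ^ 4) ^ 2) := by
  have hq4 : ‖q ^ 4‖ < 1 := by simpa [← pow_mul] using norm_sq_lt_one (norm_sq_lt_one hq)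
  have hne := mul_ne_zero (qPochhammerInf_self_ne_zero hq) (qPochhammerInf_self_ne_zero hq4)
  have triple : ∑' n : ℤ, q ^ (n.natAbs ^ 2) =
      qPochhammerInf (q ^ 2) (q ^ 2) * qPochhammerInf (-q) (q ^ 2) ^ 2 := by
    simpa [sq] using tsum_pow_sq_mul_zpow_eq_qPochhammerInf hq one_ne_zero
  rw [triple, eq_div_of_mul_eq hne (qPochhammerInf_neg_sq_mul hq)]
  ring

end ThetaNullwert

section DedekindEta

open Real

lemma dedekindEta_eq_exp_mul_qPochhammerInf {τ q : ℂ} (hq : cexp (2 * π * I * τ) = q) :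
    dedekindEta τ = cexp (π * I * τ / 12) * qPochhammerInf q q := by
  rw [dedekindEta, qPochhammerInf]
  congr 1
  refine tprod_congr fun n ↦ ?_
  rw [← pow_succ', ← hq, ← Complex.exp_nat_mul]
  push_cast
  ring_nf

lemma jacobiTheta_two_mul_eq_tsum {τ q : ℂ} (hq : cexp (2 * π * I * τ) = q) :
    jacobiTheta (2 * τ) = ∑' n : ℤ, q ^ (n.natAbs ^ 2) := by
  refine tsum_congr fun n ↦ ?_
  have hn : ((n.natAbs ^ 2 : ℕ) : ℂ) = (n : ℂ) ^ 2 := by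
    rw [← Int.cast_natCast, Nat.cast_pow, Int.natAbs_sq, Int.cast_pow]
  rw [← hq, ← Complex.exp_nat_mul, hn]
  ring_nf

theorem jacobiTheta_two_mul_eq_dedekindEta {τ : ℂ} (hτ : 0 < τ.im) :
    jacobiTheta (2 * τ) =
      dedekindEta (2 * τ) ^ 5 / (dedekindEta τ ^ 2 * dedekindEta (4 * τ) ^ 2) := by
  set q := cexp (2 * π * I * τ) with hq
  have hq2 : cexp (2 * π * I * (2 * τ)) = q ^ 2 := by
    rw [hq, ← Complex.exp_nat_mul]; push_cast; ring_nf
  have hq4 : cexp (2 * π * I * (4 * τ)) = q ^ 4 := by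
    rw [hq, ← Complex.exp_nat_mul]; push_cast; ring_nf
  have hfactor : cexp (π * I * (2 * τ) / 12) ^ 5 =
      cexp (π * I * τ / 12) ^ 2 * cexp (π * I * (4 * τ) / 12) ^ 2 := by
    simp only [← Complex.exp_nat_mul, ← Complex.exp_add]
    push_cast
    ring_nf
  have hq1 : ‖q‖ < 1 := UpperHalfPlane.norm_exp_two_pi_I_lt_one ⟨τ, hτ⟩
  rw [jacobiTheta_two_mul_eq_tsum hq.symm, tsum_pow_sq_eq_qPochhammerInf hq1,
    dedekindEta_eq_exp_mul_qPochhammerInf hq.symm, dedekindEta_eq_exp_mul_qPochhammerInf hq2,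
    dedekindEta_eq_exp_mul_qPochhammerInf hq4, mul_pow _ _ 5, hfactor, mul_pow, mul_pow,
    mul_mul_mul_comm (cexp _ ^ 2), mul_div_mul_left]
  exact mul_ne_zero (pow_ne_zero _ (Complex.exp_ne_zero _)) (pow_ne_zero _ (Complex.exp_ne_zero _))

lemma jacobiThetaZw_eq_jacobiTheta₂ (v τ : ℂ) :
    jacobiThetaZw v τ =
      cexp (π * I * (v + 1 / 2 + τ / 4)) * jacobiTheta₂ (v + 1 / 2 + τ / 2) τ := by
  rw [jacobiThetaZw, jacobiTheta₂, ← tsum_mul_left]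
  refine tsum_congr fun n ↦ ?_
  rw [jacobiTheta₂_term, ← Complex.exp_add, ← Complex.exp_add]
  ring_nf

end DedekindEta

/-- `ϑ(τ − 1/2; 2τ) = e^{−πiτ/2} · η(2τ)⁵/(η(τ)²·η(4τ)²)`. -/
theorem theta_eq_e2 (τ : ℂ) (hτ : 0 < τ.im) :
    jacobiThetaZw (τ - 1/2) (2 * τ) =
      Complex.exp (-(Real.pi : ℂ) * I * τ / 2) *
        (dedekindEta (2 * τ) ^ 5 / (dedekindEta τ ^ 2 * dedekindEta (4 * τ) ^ 2)) := by
  have quasi_period : jacobiTheta₂ (2 * τ) (2 * τ) =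
      cexp (-Real.pi * I * (2 * τ)) * jacobiTheta (2 * τ) := by
    simpa [jacobiTheta_eq_jacobiTheta₂] using jacobiTheta₂_add_left' 0 (2 * τ)
  rw [jacobiThetaZw_eq_jacobiTheta₂, ← jacobiTheta_two_mul_eq_dedekindEta hτ,
    show τ - 1 / 2 + 1 / 2 + 2 * τ / 2 = 2 * τ by ring, quasi_period, ← mul_assoc,
    ← Complex.exp_add]
  ring_nf
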